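/- Each arm of the generating curve has infinite total curvature: the tangent angle θ(s) = θ(0) + ∫₀ˢ k(t) dt tends to +∞ both as s → +∞ and as s → −∞. In other words, ∫_{s₀}^{∞} k(t) dt = +∞ and ∫_{−∞}^{s₀} k(t) dt = −∞ for any s₀. -/

import Mathlib

open Filter Topology

/- Context: `h > 0`; `τ, ν : ℝ → ℝ` solve the ODE system of the generating curve of a
helicoidal surface of pitch `h` rotating with unit angular speed under mean curvature flow:
`τ' = ((τ² + h²)/(τ² + ν² + h²))(1 + τν)`, `ν' = (τν − τ²(τ² + h²))/(τ² + ν² + h²)`,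
with `r = √(τ² + ν²)` and signed curvature `k = (τ(τ² + h²) − ν)/(r² + h²)`. -/

theorem aux_mono (f f' : ℝ → ℝ) (a : ℝ) (hf : ∀ x, HasDerivAt f (f' x) x)
    (hp : ∀ x, a ≤ x → 0 ≤ f' x) (x : ℝ) (hx : a ≤ x) : f a ≤ f x := by
  have hm : MonotoneOn f (Set.Ici a) := by
    apply monotoneOn_of_deriv_nonneg (convex_Ici a)
    · exact fun y _ => (hf y).continuousAt.continuousWithinAt
    · exact fun y _ => (hf y).differentiableAt.differentiableWithinAt
    · intro y hy
      rw [interior_Ici] at hy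
      rw [(hf y).deriv]
      exact hp y (le_of_lt hy)
  exact hm (Set.mem_Ici.2 le_rfl) hx hx

theorem aux_barrier (f f' : ℝ → ℝ) (a : ℝ) (hf : ∀ x, HasDerivAt f (f' x) x)
    (ha : f a ≤ 0) (hp : ∀ x, a ≤ x → f x = 0 → f' x < 0) (x : ℝ) (hx : a ≤ x) : f x ≤ 0 := by
  have := image_le_of_deriv_right_lt_deriv_boundary (f := f) (f' := f') (a := a) (b := x)
    (B := fun _ => 0) (B' := fun _ => 0)
    (fun y _ => (hf y).continuousAt.continuousWithinAt)
    (fun y _ => (hf y).hasDerivWithinAt) ha (fun y => hasDerivAt_const y 0)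
    (fun y hy h0 => hp y hy.1 h0)
  exact this ⟨hx, le_rfl⟩

theorem aux_top
    (h : ℝ) (hh : 0 < h) (τ ν : ℝ → ℝ)
    (hτ : ∀ s : ℝ, HasDerivAt τ
      ((τ s ^ 2 + h ^ 2) / (τ s ^ 2 + ν s ^ 2 + h ^ 2) * (1 + τ s * ν s)) s)
    (hν : ∀ s : ℝ, HasDerivAt ν
      ((τ s * ν s - τ s ^ 2 * (τ s ^ 2 + h ^ 2)) / (τ s ^ 2 + ν s ^ 2 + h ^ 2)) s)
    (k : ℝ → ℝ)
    (hk : ∀ s : ℝ, k s = (τ s * (τ s ^ 2 + h ^ 2) - ν s) / (τ s ^ 2 + ν s ^ 2 + h ^ 2))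
    (θ₀ : ℝ) :
    Tendsto (fun s => θ₀ + ∫ t in (0:ℝ)..s, k t) atTop atTop := by
  have hD : ∀ s, 0 < τ s ^ 2 + ν s ^ 2 + h ^ 2 := fun s => by positivity
  have hA : ∀ s, 0 < τ s ^ 2 + h ^ 2 := fun s => by positivity
  have hR : ∀ s, HasDerivAt (fun s => τ s ^ 2 + ν s ^ 2) (2 * τ s) s := by
    intro s
    have := ((hτ s).pow 2).add ((hν s).pow 2)
    refine this.congr_deriv ?_
    have := (hD s).ne'
    field_simp
    ring
  -- the Lyapunov function
  have hw : ∀ s, HasDerivAt (fun s => ν s - Real.arctan (τ s / h) / h)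
      (-((1 + τ s ^ 2 * (τ s ^ 2 + h ^ 2)) / (τ s ^ 2 + ν s ^ 2 + h ^ 2))) s := by
    intro s
    have := (hν s).sub ((((hτ s).div_const h).arctan).div_const h)
    refine this.congr_deriv ?_
    have h1 := (hD s).ne'
    have h2 := (hA s).ne'
    have h3 : 1 + (τ s / h) ^ 2 = (τ s ^ 2 + h ^ 2) / h ^ 2 := by field_simp; ring
    rw [h3]
    field_simp
    ring
  have hat : ∀ s, |Real.arctan (τ s / h) / h| ≤ 2 / h := by
    intro s
    rw [abs_div, abs_of_pos hh]
    gcongr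
    rw [abs_le]
    have := Real.neg_pi_div_two_lt_arctan (τ s / h)
    have := Real.arctan_lt_pi_div_two (τ s / h)
    have := Real.pi_le_four
    constructor <;> linarith
  -- ν is not bounded below
  have hunb : ∀ a B : ℝ, ∃ s, a ≤ s ∧ ν s < B := by
    intro a B
    by_contra hc
    push Not at hc
    have hup : ∀ s, a ≤ s → ν s ≤ ν a + 4 / h := by
      intro s hs
      have := aux_mono (fun s => -(ν s - Real.arctan (τ s / h) / h)) _ a (fun x => (hw x).neg)
        (fun x _ => by rw [neg_neg]; have := hD x; positivity) s hs
      have h1 := abs_le.1 (hat s)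
      have h2 := abs_le.1 (hat a)
      have h3 : 4 / h = 2 / h + 2 / h := by ring
      linarith [h1.1, h1.2, h2.1, h2.2]
    obtain ⟨M, hM⟩ : ∃ M, M = B ^ 2 + (ν a + 4 / h) ^ 2 := ⟨_, rfl⟩
    have hM0 : 0 ≤ M := by rw [hM]; positivity
    have hsq : ∀ s, a ≤ s → ν s ^ 2 ≤ M := by
      intro s hs
      have h1 := hc s hs
      have h2 := hup s hs
      rw [hM]
      rcases le_total 0 (ν s) with h0 | h0
      · nlinarith [sq_nonneg B]
      · nlinarith [sq_nonneg (ν a + 4 / h)]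
    have hc0 : 0 < 1 + h ^ 2 + M := by positivity
    have hdec : ∀ s, a ≤ s → 1 / (1 + h ^ 2 + M) ≤
        (1 + τ s ^ 2 * (τ s ^ 2 + h ^ 2)) / (τ s ^ 2 + ν s ^ 2 + h ^ 2) := by
      intro s hs
      rw [div_le_div_iff₀ hc0 (hD s)]
      have h1 := hsq s hs
      have h2 : 0 ≤ τ s ^ 2 * (τ s ^ 2 + h ^ 2) := by positivity
      have h3 : 0 ≤ τ s ^ 2 * (τ s ^ 2 + h ^ 2) * (h ^ 2 + M) := by positivity
      have h4 : 0 ≤ τ s ^ 2 * h ^ 2 := by positivity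
      nlinarith [sq_nonneg (τ s ^ 2 - 1)]
    obtain ⟨c, hcdef⟩ : ∃ c, c = 1 / (1 + h ^ 2 + M) := ⟨_, rfl⟩
    have hcpos : 0 < c := by rw [hcdef]; positivity
    have hlow : ∀ s, a ≤ s → c * (s - a) ≤ ν a + 4 / h - B := by
      intro s hs
      have := aux_mono (fun s => -(ν s - Real.arctan (τ s / h) / h) - c * s) _ a
        (fun x => (hw x).neg.sub ((hasDerivAt_id x).const_mul c))
        (fun x hx => by rw [neg_neg]; have := hdec x hx; rw [← hcdef] at this; linarith) s hs
      have h1 := abs_le.1 (hat s)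
      have h2 := abs_le.1 (hat a)
      have h3 : 4 / h = 2 / h + 2 / h := by ring
      have h4 := hc s hs
      linarith [h1.1, h1.2, h2.1, h2.2]
    have hK : 0 ≤ ν a + 4 / h - B := by simpa using hlow a le_rfl
    have := hlow (a + (ν a + 4 / h - B + 1) / c) (by
      have : 0 ≤ (ν a + 4 / h - B + 1) / c := by positivity
      linarith)
    rw [add_sub_cancel_left, mul_div_cancel₀ _ hcpos.ne'] at this
    linarith
  -- τ is positive somewhere
  obtain ⟨a, ha⟩ : ∃ a, 0 < τ a := by
    by_contra hc
    push Not at hc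
    obtain ⟨s, hs, hs'⟩ := hunb 0 (-(τ 0 ^ 2 + ν 0 ^ 2 + 1))
    have := aux_mono (fun s => -(τ s ^ 2 + ν s ^ 2)) _ 0 (fun x => (hR x).neg)
      (fun x _ => by linarith [hc x]) s hs
    nlinarith [sq_nonneg (τ 0), sq_nonneg (ν 0), sq_nonneg (τ s)]
  have hτ0 : ∀ s, a ≤ s → 0 ≤ τ s := by
    intro s hs
    have := aux_barrier (fun s => -τ s) _ a (fun x => (hτ x).neg) (by linarith)
      (fun x _ h0 => by
        have h0' : τ x = 0 := by simpa using h0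
        have h1 := hD x
        have h2 := hA x
        rw [neg_lt_zero]
        apply mul_pos (div_pos h2 h1)
        rw [h0']; norm_num) s hs
    linarith
  have hRa : ∀ s, a ≤ s → τ a ^ 2 ≤ τ s ^ 2 + ν s ^ 2 := by
    intro s hs
    have := aux_mono _ _ a hR (fun x hx => by have := hτ0 x hx; positivity) s hs
    nlinarith [sq_nonneg (ν a)]
  obtain ⟨b, hab, hb⟩ := hunb a 0
  have hν0 : ∀ s, b ≤ s → ν s ≤ 0 := by
    apply aux_barrier ν _ b hν hb.le
    intro x hx h0
    have h1 := hRa x (hab.trans hx)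
    rw [h0] at h1
    have h2 : 0 < τ x ^ 2 := by nlinarith
    have h3 := hA x
    apply div_neg_of_neg_of_pos _ (hD x)
    rw [h0]
    nlinarith [mul_pos h2 h3]
  -- lower bound for k
  have hp : ∀ s, HasDerivAt (fun s => √(τ s ^ 2 + ν s ^ 2 + h ^ 2))
      (2 * τ s / (2 * √(τ s ^ 2 + ν s ^ 2 + h ^ 2))) s := fun s =>
    ((hR s).add_const (h ^ 2)).sqrt (hD s).ne'
  obtain ⟨P, hP⟩ : ∃ P, P = √(τ b ^ 2 + ν b ^ 2 + h ^ 2) := ⟨_, rfl⟩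
  have hP0 : 0 < P := by rw [hP]; exact Real.sqrt_pos.2 (hD b)
  have hpub : ∀ s, b ≤ s → √(τ s ^ 2 + ν s ^ 2 + h ^ 2) ≤ P + (s - b) := by
    intro s hs
    have := aux_mono (fun s => s - √(τ s ^ 2 + ν s ^ 2 + h ^ 2)) _ b
      (fun x => (hasDerivAt_id x).sub (hp x))
      (fun x hx => by
        have h1 : 0 < √(τ x ^ 2 + ν x ^ 2 + h ^ 2) := Real.sqrt_pos.2 (hD x)
        have h2 : τ x ≤ √(τ x ^ 2 + ν x ^ 2 + h ^ 2) :=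
          Real.le_sqrt_of_sq_le (by nlinarith [sq_nonneg (ν x), sq_nonneg h])
        rw [sub_nonneg, div_le_one (by positivity)]
        linarith) s hs
    rw [← hP] at this
    linarith
  obtain ⟨m, hm⟩ : ∃ m, m = min (h ^ 2) 1 := ⟨_, rfl⟩
  have hm0 : 0 < m := by rw [hm]; exact lt_min (by positivity) one_pos
  have hm1 : m ≤ h ^ 2 := by rw [hm]; exact min_le_left _ _
  have hm2 : m ≤ 1 := by rw [hm]; exact min_le_right _ _
  obtain ⟨q, hq⟩ : ∃ q, q = τ a / √(τ a ^ 2 + h ^ 2) := ⟨_, rfl⟩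
  have hq0 : 0 < q := by rw [hq]; exact div_pos ha (Real.sqrt_pos.2 (hA a))
  have hq2 : q ^ 2 * (τ a ^ 2 + h ^ 2) = τ a ^ 2 := by
    rw [hq, div_pow, Real.sq_sqrt (hA a).le, div_mul_cancel₀ _ (hA a).ne']
  have hq1 : q ^ 2 ≤ 1 := by
    by_contra hc
    push Not at hc
    nlinarith [hA a, sq_pos_of_pos hh]
  have hklow : ∀ s, b ≤ s → m * q / (P + (s - b)) ≤ k s := by
    intro s hs
    have h1 : 0 < √(τ s ^ 2 + ν s ^ 2 + h ^ 2) := Real.sqrt_pos.2 (hD s)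
    have h2 := hpub s hs
    have hsq := Real.sq_sqrt (hD s).le
    have ht := hτ0 s (hab.trans hs)
    have hn := hν0 s hs
    have hr := hRa s (hab.trans hs)
    have h3 : q * √(τ s ^ 2 + ν s ^ 2 + h ^ 2) ≤ τ s - ν s := by
      refine (sq_le_sq₀ (by positivity) (by linarith)).1 ?_
      rw [mul_pow, hsq]
      nlinarith [mul_nonneg ht (neg_nonneg.2 hn)]
    have h4 : m * (τ s - ν s) ≤ τ s * (τ s ^ 2 + h ^ 2) - ν s := by
      nlinarith [mul_nonneg ht (sub_nonneg.2 hm1), mul_nonneg (neg_nonneg.2 hn) (sub_nonneg.2 hm2),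
        mul_nonneg ht (sq_nonneg (τ s))]
    calc m * q / (P + (s - b)) ≤ m * q / √(τ s ^ 2 + ν s ^ 2 + h ^ 2) := by gcongr
      _ ≤ k s := by
        rw [hk, div_le_div_iff₀ h1 (hD s)]
        calc m * q * (τ s ^ 2 + ν s ^ 2 + h ^ 2)
            = m * (q * √(τ s ^ 2 + ν s ^ 2 + h ^ 2)) * √(τ s ^ 2 + ν s ^ 2 + h ^ 2) := by
              nth_rewrite 1 [← hsq]; ring
          _ ≤ m * (τ s - ν s) * √(τ s ^ 2 + ν s ^ 2 + h ^ 2) := by gcongr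
          _ ≤ _ := by gcongr
  have hkc : Continuous k := by
    have c1 : Continuous τ := continuous_iff_continuousAt.2 fun x => (hτ x).continuousAt
    have c2 : Continuous ν := continuous_iff_continuousAt.2 fun x => (hν x).continuousAt
    rw [funext hk]
    exact Continuous.div (by fun_prop) (by fun_prop) (fun s => (hD s).ne')
  have hθ : ∀ s, HasDerivAt (fun s => ∫ t in (0:ℝ)..s, k t) (k s) s := fun s =>
    hkc.integral_hasStrictDerivAt 0 s |>.hasDerivAt
  have hfin : ∀ s, b ≤ s → m * q * (Real.log (P + (s - b)) - Real.log P) +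
      (∫ t in (0:ℝ)..b, k t) ≤ ∫ t in (0:ℝ)..s, k t := by
    have hmn : MonotoneOn (fun s => (∫ t in (0:ℝ)..s, k t) - m * q * Real.log (P + (s - b)))
        (Set.Ici b) := by
      have hd : ∀ x, b ≤ x → HasDerivAt
          (fun s => (∫ t in (0:ℝ)..s, k t) - m * q * Real.log (P + (s - b)))
          (k x - m * q * (1 / (P + (x - b)))) x := by
        intro x hx
        exact (hθ x).sub (((((hasDerivAt_id x).sub_const b).const_add P).log
          (by simp only [id]; linarith)).const_mul (m * q))
      apply monotoneOn_of_deriv_nonneg (convex_Ici b)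
      · exact fun y hy => (hd y hy).continuousAt.continuousWithinAt
      · intro y hy
        rw [interior_Ici] at hy
        exact (hd y (le_of_lt hy)).differentiableAt.differentiableWithinAt
      · intro y hy
        rw [interior_Ici] at hy
        rw [(hd y (le_of_lt hy)).deriv, mul_one_div]
        exact sub_nonneg.2 (hklow y (le_of_lt hy))
    intro s hs
    have := hmn (Set.mem_Ici.2 le_rfl) hs hs
    simp only [sub_self, add_zero] at this
    linarith
  apply tendsto_atTop_add_const_left
  refine tendsto_atTop_mono' atTop (eventually_atTop.2 ⟨b, hfin⟩) ?_
  apply tendsto_atTop_add_const_right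
  apply Tendsto.const_mul_atTop (mul_pos hm0 hq0)
  simp only [sub_eq_add_neg]
  apply tendsto_atTop_add_const_right
  apply Real.tendsto_log_atTop.comp
  apply tendsto_atTop_add_const_left
  exact tendsto_atTop_add_const_right _ _ tendsto_id

/-- Lemma 4.10. Each arm has infinite total curvature: the tangent angle
`θ(s) = θ₀ + ∫₀ˢ k` tends to `+∞` in both directions; i.e. `∫_{s₀}^∞ k = +∞` and
`∫_{−∞}^{s₀} k = −∞`. -/
theorem infinite_total_curvature
    (h : ℝ) (hh : 0 < h) (τ ν : ℝ → ℝ)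
    (hτ : ∀ s : ℝ, HasDerivAt τ
      ((τ s ^ 2 + h ^ 2) / (τ s ^ 2 + ν s ^ 2 + h ^ 2) * (1 + τ s * ν s)) s)
    (hν : ∀ s : ℝ, HasDerivAt ν
      ((τ s * ν s - τ s ^ 2 * (τ s ^ 2 + h ^ 2)) / (τ s ^ 2 + ν s ^ 2 + h ^ 2)) s)
    (k : ℝ → ℝ)
    (hk : ∀ s : ℝ, k s = (τ s * (τ s ^ 2 + h ^ 2) - ν s) / (τ s ^ 2 + ν s ^ 2 + h ^ 2))
    (θ₀ : ℝ) :
    Tendsto (fun s => θ₀ + ∫ t in (0:ℝ)..s, k t) atTop atTop ∧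
    Tendsto (fun s => θ₀ + ∫ t in (0:ℝ)..s, k t) atBot atTop := by
  refine ⟨aux_top h hh τ ν hτ hν k hk θ₀, ?_⟩
  have := aux_top h hh (fun s => -τ (-s)) (fun s => -ν (-s))
    (fun s => by
      have := ((hτ (-s)).scomp s (hasDerivAt_neg s)).neg
      refine this.congr_deriv ?_
      simp)
    (fun s => by
      have := ((hν (-s)).scomp s (hasDerivAt_neg s)).neg
      refine this.congr_deriv ?_
      simp)
    (fun s => -k (-s))
    (fun s => by
      simp only [hk]
      rw [← neg_div]
      congr 1 <;> ring) θ₀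
  have h2 := this.comp tendsto_neg_atBot_atTop
  refine h2.congr fun s => ?_
  simp only [Function.comp, intervalIntegral.integral_neg, intervalIntegral.integral_comp_neg]
  rw [neg_neg, neg_zero, ← intervalIntegral.integral_symm]
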